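/- arXiv:2401.09366 — 2 statements merged into one kernel-verified Lean document; each statement's English description precedes it below -/
import Mathlib

section
/- Let C and D be categories, let F : C ⥤ C be an endofunctor, and let (A, a : F(A) ⟶ A) be an initial F-algebra (an initial object in the category of F-algebras). Suppose C has an initial object and colimits of ℕ-indexed chains, F preserves colimits of ℕ-indexed chains, and L : C ⥤ D preserves initial objects and colimits of ℕ-indexed chains. Let X be an object of D and let Ψ be a natural transformation between the contravariant functors C^op ⥤ Type sending an object c to the hom-set D(L(c), X) and to D(L(F(c)), X) respectively. Then there exists a unique morphism h : L(A) ⟶ X in D such that L(a) ≫ h = Ψ_A(h). -/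
open CategoryTheory CategoryTheory.Limits

universe v₁ v₂ u₁ u₂

namespace MendlerAux

variable {C : Type u₁} [Category.{v₁} C] {D : Type u₂} [Category.{v₂} D]

/-- Objects of the initial chain. -/
noncomputable def chObj (F : C ⥤ C) [HasInitial C] : ℕ → C
  | 0 => ⊥_ C
  | n + 1 => F.obj (chObj F n)

/-- Maps of the initial chain. -/
noncomputable def chMap (F : C ⥤ C) [HasInitial C] : ∀ n, chObj F n ⟶ chObj F (n + 1)
  | 0 => initial.to _
  | n + 1 => F.map (chMap F n)

theorem exists_desc {S : ℕ ⥤ D} {c : Cocone S} (hc : IsColimit c) {Y : D}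
    (φ : ∀ n, S.obj n ⟶ Y)
    (hφ : ∀ n, S.map (homOfLE (Nat.le_add_right n 1)) ≫ φ (n + 1) = φ n) :
    ∃ d : c.pt ⟶ Y, ∀ n, c.ι.app n ≫ d = φ n :=
  ⟨hc.desc ⟨Y, NatTrans.ofSequence (G := (Functor.const ℕ).obj Y) φ
    (fun n => by
      rw [hφ]
      exact (Category.comp_id _).symm)⟩, fun n => by
    rw [hc.fac]
    rfl⟩

theorem psi_nat {F : C ⥤ C} {L : C ⥤ D} {X : D}
    (Ψ : L.op ⋙ yoneda.obj X ⟶ F.op ⋙ L.op ⋙ yoneda.obj X) {a b : C} (f : a ⟶ b)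
    (h : L.obj b ⟶ X) :
    (Ψ.app (Opposite.op a) (L.map f ≫ h) : L.obj (F.obj a) ⟶ X) =
      L.map (F.map f) ≫ (Ψ.app (Opposite.op b) h : L.obj (F.obj b) ⟶ X) :=
  NatTrans.naturality_apply Ψ f.op h

end MendlerAux

/-- Generalised Mendler-style iteration, ω-cocontinuity version
(Bird–Paterson, Theorem 1 of "Generalised folds for nested datatypes"). -/
theorem generalised_mendler_iteration_cocontinuous
    {C : Type u₁} [Category.{v₁} C] {D : Type u₂} [Category.{v₂} D]
    (F : C ⥤ C) (alg : Endofunctor.Algebra F) (halg : IsInitial alg)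
    [HasInitial C] [HasColimitsOfShape ℕ C]
    [PreservesColimitsOfShape ℕ F]
    (L : C ⥤ D)
    [PreservesColimitsOfShape (Discrete PEmpty.{1}) L]
    [PreservesColimitsOfShape ℕ L]
    (X : D)
    (Ψ : L.op ⋙ yoneda.obj X ⟶ F.op ⋙ L.op ⋙ yoneda.obj X) :
    ∃! h : L.obj alg.a ⟶ X, L.map alg.str ≫ h = Ψ.app (Opposite.op alg.a) h := by
  classical
  let S : ℕ ⥤ C := Functor.ofSequence (MendlerAux.chMap F)
  have hS : ∀ n, S.map (homOfLE (Nat.le_add_right n 1)) = MendlerAux.chMap F n :=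
    fun n => Functor.ofSequence_map_homOfLE_succ _ n
  let c : Cocone S := colimit.cocone S
  have hc : IsColimit c := colimit.isColimit S
  have hF : IsColimit (F.mapCocone c) := isColimitOfPreserves F hc
  have hL : IsColimit (L.mapCocone c) := isColimitOfPreserves L hc
  have hLF : IsColimit (L.mapCocone (F.mapCocone c)) := isColimitOfPreserves L hF
  have h0 : IsInitial (L.obj (⊥_ C)) := IsInitial.isInitialObj L _ initialIsInitial
  let i : ∀ n, MendlerAux.chObj F n ⟶ c.pt := fun n => c.ι.app n
  have hi : ∀ n, MendlerAux.chMap F n ≫ i (n + 1) = i n := fun n => by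
    rw [← hS]
    exact c.w _
  -- algebra structure on the colimit
  obtain ⟨k, hk⟩ : ∃ k : F.obj c.pt ⟶ c.pt, ∀ n, F.map (i n) ≫ k = i (n + 1) :=
    MendlerAux.exists_desc hF (fun n => i (n + 1)) (fun n => by
      change F.map (S.map _) ≫ _ = _
      rw [hS]
      exact hi (n + 1))
  -- the cocone on the initial algebra
  let j : ∀ n, MendlerAux.chObj F n ⟶ alg.a := fun n =>
    Nat.rec (motive := fun n => MendlerAux.chObj F n ⟶ alg.a) (initial.to _)
      (fun _ f => F.map f ≫ alg.str) n
  have hjs : ∀ n, j (n + 1) = F.map (j n) ≫ alg.str := fun n => rfl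
  have hj : ∀ n, MendlerAux.chMap F n ≫ j (n + 1) = j n := by
    intro n
    induction n with
    | zero => exact initialIsInitial.hom_ext _ _
    | succ n ih =>
      rw [hjs (n + 1)]
      change F.map (MendlerAux.chMap F n) ≫ F.map (j (n + 1)) ≫ alg.str = F.map (j n) ≫ alg.str
      rw [← Functor.map_comp_assoc, ih]
  obtain ⟨d, hd⟩ : ∃ d : c.pt ⟶ alg.a, ∀ n, i n ≫ d = j n :=
    MendlerAux.exists_desc hc j (fun n => by
      rw [hS]
      exact hj n)
  have hdalg : F.map d ≫ alg.str = k ≫ d := by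
    refine hF.hom_ext fun n => ?_
    change F.map (i n) ≫ _ = F.map (i n) ≫ _
    rw [← Functor.map_comp_assoc, hd, ← Category.assoc, hk]
    exact (hd (n + 1)).symm
  let K : Endofunctor.Algebra F := ⟨c.pt, k⟩
  let dd : K ⟶ alg := ⟨d, hdalg⟩
  let ee : alg ⟶ K := halg.to K
  let e : alg.a ⟶ c.pt := ee.f
  have he : F.map e ≫ k = alg.str ≫ e := ee.h
  have hed : e ≫ d = 𝟙 _ := congrArg Endofunctor.Algebra.Hom.f (halg.hom_ext (ee ≫ dd) (𝟙 alg))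
  -- the approximations of the solution
  let g : ∀ n, L.obj (MendlerAux.chObj F n) ⟶ X := fun n =>
    Nat.rec (motive := fun n => L.obj (MendlerAux.chObj F n) ⟶ X) (h0.to X)
      (fun n f => Ψ.app (Opposite.op (MendlerAux.chObj F n)) f) n
  have hgs : ∀ n, g (n + 1) = Ψ.app (Opposite.op (MendlerAux.chObj F n)) (g n) := fun n => rfl
  have hg : ∀ n, L.map (MendlerAux.chMap F n) ≫ g (n + 1) = g n := by
    intro n
    induction n with
    | zero => exact h0.hom_ext _ _
    | succ n ih =>
      rw [hgs (n + 1)]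
      refine (MendlerAux.psi_nat Ψ (MendlerAux.chMap F n) (g (n + 1))).symm.trans ?_
      rw [ih, hgs n]
  obtain ⟨m, hm⟩ : ∃ m : L.obj c.pt ⟶ X, ∀ n, L.map (i n) ≫ m = g n :=
    MendlerAux.exists_desc hL g (fun n => by
      change L.map (S.map _) ≫ _ = _
      rw [hS]
      exact hg n)
  have hmk : L.map k ≫ m = Ψ.app (Opposite.op c.pt) m := by
    refine hLF.hom_ext fun n => ?_
    change L.map (F.map (i n)) ≫ _ = L.map (F.map (i n)) ≫ _
    refine Eq.trans ?_ (MendlerAux.psi_nat Ψ (i n) m)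
    rw [← Functor.map_comp_assoc, hk, hm]
    exact hm (n + 1)
  refine ⟨L.map e ≫ m, ?_, ?_⟩
  · refine Eq.trans ?_ (MendlerAux.psi_nat Ψ e m).symm
    rw [← hmk, ← Functor.map_comp_assoc, ← Functor.map_comp_assoc, he]
  · intro h hh
    have key : ∀ n, L.map (j n) ≫ h = g n := by
      intro n
      induction n with
      | zero => exact h0.hom_ext _ _
      | succ n ih =>
        rw [hgs, ← ih]
        change L.map (F.map (j n) ≫ alg.str) ≫ h = _
        rw [Functor.map_comp, Category.assoc, hh]
        exact (MendlerAux.psi_nat Ψ (j n) h).symm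
    have : L.map d ≫ h = m := by
      refine hL.hom_ext fun n => ?_
      change L.map (i n) ≫ _ = L.map (i n) ≫ _
      rw [← Functor.map_comp_assoc, hd, key, hm]
    rw [← this, ← Functor.map_comp_assoc, hed, CategoryTheory.Functor.map_id, Category.id_comp]
end

section
/- Let C and D be categories, let F : C ⥤ C be an endofunctor with an initial F-algebra (A, a : F(A) ⟶ A), and let L : C ⥤ D be a functor admitting a right adjoint R : D ⥤ C. Let X be an object of D and let Ψ be a natural transformation between the contravariant functors C^op ⥤ Type sending an object c to the hom-set D(L(c), X) and to D(L(F(c)), X) respectively. Then there exists a unique morphism h : L(A) ⟶ X in D such that L(a) ≫ h = Ψ_A(h). -/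
open CategoryTheory CategoryTheory.Limits

universe v₁ v₂ u₁ u₂

/-- Generalised Mendler-style iteration, adjoint version
(Bird–Paterson, Theorem 2 of "Generalised folds for nested datatypes"). -/
theorem generalised_mendler_iteration_adjoint
    {C : Type u₁} [Category.{v₁} C] {D : Type u₂} [Category.{v₂} D]
    (F : C ⥤ C) (alg : Endofunctor.Algebra F) (halg : IsInitial alg)
    (L : C ⥤ D) (R : D ⥤ C) (adj : L ⊣ R)
    (X : D)
    (Ψ : L.op ⋙ yoneda.obj X ⟶ F.op ⋙ L.op ⋙ yoneda.obj X) :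
    ∃! h : L.obj alg.a ⟶ X, L.map alg.str ≫ h = Ψ.app (Opposite.op alg.a) h := by
  let e : L.obj (R.obj X) ⟶ X := adj.counit.app X
  let p : L.obj (F.obj (R.obj X)) ⟶ X := Ψ.app (Opposite.op (R.obj X)) e
  let B : Endofunctor.Algebra F := ⟨R.obj X, adj.homEquiv _ _ p⟩
  have nat : ∀ g : alg.a ⟶ R.obj X,
      Ψ.app (Opposite.op alg.a) (L.map g ≫ e) = L.map (F.map g) ≫ p := by
    intro g
    exact NatTrans.naturality_apply Ψ g.op e
  have key : ∀ g : alg.a ⟶ R.obj X,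
      L.map alg.str ≫ (L.map g ≫ e) = Ψ.app (Opposite.op alg.a) (L.map g ≫ e) ↔
        F.map g ≫ B.str = alg.str ≫ g := by
    intro g
    rw [nat g, ← (adj.homEquiv _ _).apply_eq_iff_eq, adj.homEquiv_naturality_left,
      adj.homEquiv_naturality_left, adj.homEquiv_naturality_left]
    have : adj.homEquiv _ _ e = 𝟙 _ := by simp [e, Adjunction.homEquiv_unit]
    rw [this, Category.comp_id]
    exact eq_comm
  have surj : ∀ h : L.obj alg.a ⟶ X, L.map (adj.homEquiv _ _ h) ≫ e = h := by
    intro h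
    simp [e, Adjunction.homEquiv_unit]
  refine ⟨L.map (halg.to B).f ≫ e, (key _).2 (halg.to B).h, ?_⟩
  intro h hh
  have hk : F.map (adj.homEquiv _ _ h) ≫ B.str = alg.str ≫ adj.homEquiv _ _ h := by
    apply (key _).1
    rw [surj]
    exact hh
  let m : alg ⟶ B := ⟨adj.homEquiv _ _ h, hk⟩
  have hm : m = halg.to B := halg.hom_ext _ _
  rw [← hm]
  exact (surj h).symm
end
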